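/- The Graev free abelian topological group A_G(s) over the convergent sequence s is not a quasi-Mackey group: there exists a locally quasi-convex group topology ν on the underlying group ℤ^(ℕ) of A_G(s) that is compatible with the topology τ of A_G(s) and satisfies τ < ν (ν is strictly finer than τ). -/

import Mathlib

open Filter Topology

noncomputable section

/-- `𝕊₊ = {z ∈ 𝕊 : Re z ≥ 0}`. -/
def SPlus : Set Circle := {z : Circle | 0 ≤ (z : ℂ).re}

/-- A character of an abelian group `G` is a homomorphism `G → 𝕊`. -/
def IsChar {G : Type*} [AddCommGroup G] (χ : G → Circle) : Prop :=
  ∀ x y : G, χ (x + y) = χ x * χ y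

/-- Two topologies on an abelian group `G` are *compatible* if they have the same
continuous characters `G → 𝕊`. -/
def Compatible {G : Type*} [AddCommGroup G] (t₁ t₂ : TopologicalSpace G) : Prop :=
  ∀ χ : G → Circle, IsChar χ →
    (@Continuous G Circle t₁ _ χ ↔ @Continuous G Circle t₂ _ χ)

/-- A subset `A` of a topological abelian group is *quasi-convex* if for every `g ∉ A`
there is a continuous character `χ` with `χ(A) ⊆ 𝕊₊` and `χ(g) ∉ 𝕊₊`. -/
def IsQuasiConvex {G : Type*} [AddCommGroup G] (t : TopologicalSpace G) (A : Set G) : Prop :=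
  ∀ g : G, g ∉ A → ∃ χ : G → Circle, IsChar χ ∧ @Continuous G Circle t _ χ ∧
    (∀ a ∈ A, χ a ∈ SPlus) ∧ χ g ∉ SPlus

/-- A topological abelian group is *locally quasi-convex* if it has a neighborhood base
at `0` consisting of quasi-convex sets. -/
def LocallyQuasiConvex {G : Type*} [AddCommGroup G] (t : TopologicalSpace G) : Prop :=
  ∀ U ∈ @nhds G t 0, ∃ V ∈ @nhds G t 0, V ⊆ U ∧ IsQuasiConvex t V

/-- The convergent sequence `s = {0} ∪ {1/n : n ∈ ℕ}` as a subspace of `ℝ`. -/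
def sSet : Set ℝ := {x : ℝ | x = 0 ∨ ∃ n : ℕ, 0 < n ∧ x = 1 / n}

/-- The natural map `s → ℤ^(ℕ)`, sending `0 ↦ 0` and `1/n ↦ e_n = single n 1`. -/
def sMap (x : sSet) : ℕ →₀ ℤ :=
  if (x : ℝ) = 0 then 0 else Finsupp.single ⌈(1 : ℝ) / (x : ℝ)⌉₊ 1

/-- The topology of the Graev free abelian topological group `A_G(s)`, i.e. the finest
group topology on `ℤ^(ℕ)` making `sMap : s → ℤ^(ℕ)` continuous.  In Mathlib's lattice of
(group) topologies `t ≤ s` means `t` is *finer* than `s`, so the finest such group topology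
is the `sInf` of the collection of all group topologies making `sMap` continuous; this
`sInf` itself makes `sMap` continuous, since `Continuous` into `t` means
`coinduced sMap _ ≤ t.toTopologicalSpace`, a condition preserved by `sInf`. -/
def tauGT : AddGroupTopology (ℕ →₀ ℤ) :=
  sInf {t : AddGroupTopology (ℕ →₀ ℤ) | @Continuous _ _ _ t.toTopologicalSpace sMap}

/-- The topology `τ` of `A_G(s)` on `ℤ^(ℕ)`. -/
def tau : TopologicalSpace (ℕ →₀ ℤ) := tauGT.toTopologicalSpace

/-!
Let `z ∈ 𝕊` have infinite order and let `ν` be the join of `τ` with the topology of uniform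
convergence of the characters `x ↦ z ^ x n`. It is strictly finer than `τ` because the `n`-th of
these characters takes the value `z ≠ 1` at `e_n`. The unit balls of the norms `∑ n, g n * |x n|`
with `g → 0` form a quasi-convex base of `τ` at `0`, so `ν` is locally quasi-convex as well.

If `χ` is `ν`-continuous, it maps `{x | ∑ n, g n * |x n| ≤ 1 ∧ ∀ n, z ^ x n ∈ U}` into `𝕊₊` for some
`g → 0` and some neighborhood `U` of `1`. When `z ^ a ∈ U`, this set contains every sum of `m`
distinct elements `a e_k` with `k` large, for each `m`, which forces `χ(e_n) ^ a → 1`. These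
exponents `a` generate `ℤ` since the powers of `z` are dense, so `χ(e_n) → 1` and `χ` is
`τ`-continuous.
-/

section Circle

lemma circle_re_le_one (z : Circle) : (z : ℂ).re ≤ 1 :=
  (Complex.re_le_norm _).trans_eq (Circle.norm_coe z)

lemma circle_re_sq (z : Circle) : ((z ^ 2 : Circle) : ℂ).re = 2 * (z : ℂ).re ^ 2 - 1 := by
  have hnorm := Circle.normSq_coe z
  rw [Complex.normSq_apply] at hnorm
  rw [pow_two, Circle.coe_mul, Complex.mul_re]
  linarith

lemma circle_eq_one_of_re_eq_one {z : Circle} (hz : (z : ℂ).re = 1) : z = 1 := by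
  have hnorm := Circle.normSq_coe z
  rw [Complex.normSq_apply, hz] at hnorm
  refine Circle.ext (Complex.ext (by simpa using hz) ?_)
  simpa using hnorm

lemma isClosed_SPlus : IsClosed SPlus :=
  isClosed_le continuous_const (g := fun z : Circle => (z : ℂ).re) (by fun_prop)

lemma SPlus_mem_nhds_one : SPlus ∈ 𝓝 (1 : Circle) := by
  have hre : Continuous fun z : Circle => (z : ℂ).re := by fun_prop
  filter_upwards [hre.continuousAt.eventually (lt_mem_nhds (a := 0) (by simp))] with z hz
  exact hz.le

lemma exp_mem_SPlus {θ : ℝ} (hθ : |θ| ≤ Real.pi / 2) : Circle.exp θ ∈ SPlus := by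
  have hcos := Real.cos_nonneg_of_mem_Icc (abs_le.1 hθ)
  rwa [SPlus, Set.mem_ofPred_eq, Circle.coe_exp, Complex.exp_ofReal_mul_I_re]

lemma exp_notMem_SPlus {θ : ℝ} (h₁ : Real.pi / 2 < θ) (h₂ : θ < Real.pi + Real.pi / 2) :
    Circle.exp θ ∉ SPlus := by
  have hcos := Real.cos_neg_of_pi_div_two_lt_of_lt h₁ h₂
  rwa [SPlus, Set.mem_ofPred_eq, Circle.coe_exp, Complex.exp_ofReal_mul_I_re, not_le]

-- While the powers stay in `𝕊₊`, squaring at least doubles `1 - Re`.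
lemma two_pow_mul_one_sub_re_le {z : Circle} (hz : ∀ n : ℕ, z ^ n ∈ SPlus) (j : ℕ) :
    2 ^ j * (1 - (z : ℂ).re) ≤ 1 - ((z ^ 2 ^ j : Circle) : ℂ).re := by
  induction j with
  | zero => simp
  | succ j ih =>
    have hnonneg : 0 ≤ ((z ^ 2 ^ j : Circle) : ℂ).re := hz (2 ^ j)
    have hle := circle_re_le_one (z ^ 2 ^ j)
    have hsq : z ^ 2 ^ (j + 1) = (z ^ 2 ^ j) ^ 2 := by rw [← pow_mul, ← pow_succ]
    rw [hsq, circle_re_sq, pow_succ]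
    nlinarith

lemma eq_one_of_forall_pow_mem_SPlus {z : Circle} (hz : ∀ n : ℕ, z ^ n ∈ SPlus) : z = 1 := by
  refine circle_eq_one_of_re_eq_one (by_contra fun hne => ?_)
  have hpos : 0 < 1 - (z : ℂ).re := sub_pos.2 (lt_of_le_of_ne (circle_re_le_one z) hne)
  obtain ⟨j, hj⟩ := pow_unbounded_of_one_lt (1 / (1 - (z : ℂ).re)) one_lt_two
  rw [div_lt_iff₀ hpos] at hj
  have hnonneg : 0 ≤ ((z ^ 2 ^ j : Circle) : ℂ).re := hz (2 ^ j)
  linarith [two_pow_mul_one_sub_re_le hz j]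

lemma hasBasis_nhds_one_circle :
    (𝓝 (1 : Circle)).HasBasis (fun _ : ℕ => True) fun i => {z | ∀ n ≤ i, z ^ n ∈ SPlus} := by
  refine ⟨fun U => ⟨fun hU => ?_, ?_⟩⟩
  · have hanti : Antitone fun i : ℕ => {z : Circle | ∀ n ≤ i, z ^ n ∈ SPlus} :=
      fun _ _ hij _ hz n hn => hz n (hn.trans hij)
    have hclosed (i : ℕ) : IsClosed {z : Circle | ∀ n ≤ i, z ^ n ∈ SPlus} := by
      simp only [Set.ofPred_forall]
      exact isClosed_biInter fun n _ => isClosed_SPlus.preimage (continuous_pow n)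
    obtain ⟨i, hi⟩ := exists_subset_nhds_of_compactSpace hanti.directed_ge hclosed (U := U)
      fun z hz => by
        rw [Set.mem_iInter] at hz
        rwa [eq_one_of_forall_pow_mem_SPlus fun n => hz n n le_rfl]
    exact ⟨i, trivial, hi⟩
  · rintro ⟨i, -, hi⟩
    refine mem_of_superset ?_ hi
    refine (eventually_all_finite (Set.finite_Iic i)).2 fun n _ => ?_
    exact (continuous_pow n).continuousAt (by simpa using SPlus_mem_nhds_one)

-- Any cluster point `c` of `w` satisfies `c ^ m ∈ 𝕊₊` for all `m`: multiply `m` distinct terms of a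
-- subsequence converging to `c`.
lemma tendsto_one_of_prod_mem_SPlus {w : ℕ → Circle}
    (hw : ∀ m : ℕ, ∀ᶠ n in atTop, ∀ F : Finset ℕ, F.card = m → (∀ k ∈ F, n ≤ k) →
      ∏ k ∈ F, w k ∈ SPlus) :
    Tendsto w atTop (𝓝 1) := by
  refine tendsto_nhds_of_unique_mapClusterPt fun c hc => ?_
  obtain ⟨ψ, hψ, hlim⟩ := hc.tendsto_subseq
  refine eq_one_of_forall_pow_mem_SPlus fun m => ?_
  have hprod : Tendsto (fun n => ∏ l ∈ Finset.range m, w (ψ (n + l))) atTop (𝓝 (c ^ m)) := by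
    simpa using tendsto_finsetProd (Finset.range m) fun l _ =>
      hlim.comp (tendsto_add_atTop_nat l)
  refine isClosed_SPlus.mem_of_tendsto hprod ?_
  filter_upwards [hw m] with n hn
  let shift : ℕ ↪ ℕ := ⟨fun l => ψ (n + l), hψ.injective.comp (add_right_injective n)⟩
  have := hn ((Finset.range m).map shift) (by simp) fun k hk => by
    obtain ⟨l, -, rfl⟩ := Finset.mem_map.1 hk
    exact (Nat.le_add_right n l).trans hψ.le_apply
  rwa [Finset.prod_map] at this

lemma exists_circle_not_isOfFinOrder : ∃ z : Circle, ¬ IsOfFinOrder z := by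
  refine ⟨Circle.exp 1, fun h => ?_⟩
  obtain ⟨n, hn, hexp⟩ := isOfFinOrder_iff_pow_eq_one.1 h
  rw [← Circle.exp_nsmul, ← Circle.exp_zero, Circle.exp_eq_exp] at hexp
  obtain ⟨m, hm⟩ := hexp
  have hnm : (n : ℝ) = m * (2 * Real.pi) := by simpa using hm
  have hm0 : m ≠ 0 := by
    rintro rfl
    simp [hn.ne'] at hnm
  refine ((irrational_pi.ratCast_mul two_ne_zero).intCast_mul hm0).ne_nat n ?_
  simpa using hnm.symm

lemma denseRange_zpow_circle {z : Circle} (hz : ¬ IsOfFinOrder z) :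
    DenseRange fun n : ℤ => z ^ n := by
  have : Fact (0 < 2 * Real.pi) := ⟨Real.two_pi_pos⟩
  let φ := AddCircle.homeomorphCircle this.out.ne'
  obtain ⟨a, rfl⟩ := φ.surjective z
  have ha : addOrderOf a = 0 := addOrderOf_eq_zero fun h => by
    obtain ⟨n, hn, hna⟩ := isOfFinAddOrder_iff_nsmul_eq_zero.1 h
    refine hz (isOfFinOrder_iff_pow_eq_one.2 ⟨n, hn, ?_⟩)
    rw [AddCircle.homeomorphCircle_apply, ← AddCircle.toCircle_nsmul, hna, AddCircle.toCircle_zero]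
  convert φ.surjective.denseRange.comp (AddCircle.denseRange_zsmul_iff.2 ha) φ.continuous with n
  simp only [Function.comp_apply, φ, AddCircle.homeomorphCircle_apply, AddCircle.toCircle_zsmul]

lemma exists_zpow_one_add_mul_mem {z : Circle} (hz : ¬ IsOfFinOrder z) {U : Set Circle}
    (hU : U ∈ 𝓝 1) {c : ℤ} (hc : c ≠ 0) : ∃ b : ℤ, z ^ (1 + c * b) ∈ U := by
  have hzc : ¬ IsOfFinOrder (z ^ c) := fun h => by
    obtain ⟨n, hn, hzcn⟩ := isOfFinOrder_iff_zpow_eq_one.1 h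
    exact hz (isOfFinOrder_iff_zpow_eq_one.2 ⟨c * n, mul_ne_zero hc hn, by rwa [zpow_mul]⟩)
  have hpre : (z * ·) ⁻¹' U ∈ 𝓝 z⁻¹ :=
    (continuous_const_mul z).continuousAt (by simpa using hU)
  obtain ⟨_, hb, b, rfl⟩ := mem_closure_iff_nhds.1 (denseRange_zpow_circle hzc z⁻¹) _ hpre
  exact ⟨b, by simpa [zpow_add, zpow_mul] using hb⟩

lemma one_mem_of_forall_zpow_mem {z : Circle} (hz : ¬ IsOfFinOrder z) {U : Set Circle}
    (hU : U ∈ 𝓝 1) {H : AddSubgroup ℤ} (hH : ∀ a : ℤ, z ^ a ∈ U → a ∈ H) : 1 ∈ H := by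
  obtain ⟨b, hb⟩ := exists_zpow_one_add_mul_mem hz hU two_ne_zero
  obtain ⟨d, hd⟩ := exists_zpow_one_add_mul_mem hz hU (c := 1 + 2 * b) (by omega)
  have := H.sub_mem (hH _ hd) (H.zsmul_mem (hH _ hb) d)
  rwa [smul_eq_mul, mul_comm d, add_sub_cancel_right] at this

end Circle

section QuasiConvexity

variable {G ι : Type*} [AddCommGroup G]

lemma compatible_iff_forall_addChar {t₁ t₂ : TopologicalSpace G} : Compatible t₁ t₂ ↔
    ∀ χ : AddChar G Circle, Continuous[t₁, _] χ ↔ Continuous[t₂, _] χ := by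
  refine ⟨fun h χ => h χ χ.map_add_eq_mul, fun h χ hχ => ?_⟩
  exact h { toFun := χ, map_zero_eq_one' := by simpa using hχ 0 0, map_add_eq_mul' := hχ }

lemma isQuasiConvex_setOf_forall_mem_SPlus {t : TopologicalSpace G} {χ : ι → AddChar G Circle}
    (hχ : ∀ i, Continuous[t, _] (χ i)) : IsQuasiConvex t {x | ∀ i, χ i x ∈ SPlus} := by
  intro g hg
  obtain ⟨i, hi⟩ := not_forall.1 hg
  exact ⟨χ i, (χ i).map_add_eq_mul, hχ i, fun x hx => hx i, hi⟩

lemma IsQuasiConvex.of_le {t₁ t₂ : TopologicalSpace G} {A : Set G} (hA : IsQuasiConvex t₂ A)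
    (ht : t₁ ≤ t₂) : IsQuasiConvex t₁ A := fun g hg =>
  let ⟨χ, hχ, hcont, hmem, hnot⟩ := hA g hg
  ⟨χ, hχ, continuous_le_dom ht hcont, hmem, hnot⟩

lemma IsQuasiConvex.inter {t : TopologicalSpace G} {A B : Set G} (hA : IsQuasiConvex t A)
    (hB : IsQuasiConvex t B) : IsQuasiConvex t (A ∩ B) := by
  intro g hg
  rcases not_and_or.1 hg with hgA | hgB
  · obtain ⟨χ, hχ, hcont, hmem, hnot⟩ := hA g hgA
    exact ⟨χ, hχ, hcont, fun x hx => hmem x hx.1, hnot⟩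
  · obtain ⟨χ, hχ, hcont, hmem, hnot⟩ := hB g hgB
    exact ⟨χ, hχ, hcont, fun x hx => hmem x hx.2, hnot⟩

lemma LocallyQuasiConvex.inf {t₁ t₂ : TopologicalSpace G} (h₁ : LocallyQuasiConvex t₁)
    (h₂ : LocallyQuasiConvex t₂) : LocallyQuasiConvex (t₁ ⊓ t₂) := by
  intro U hU
  rw [nhds_inf (t₁ := t₁)] at hU
  obtain ⟨U₁, hU₁, U₂, hU₂, rfl⟩ := mem_inf_iff.1 hU
  obtain ⟨V₁, hV₁, hVU₁, hqc₁⟩ := h₁ U₁ hU₁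
  obtain ⟨V₂, hV₂, hVU₂, hqc₂⟩ := h₂ U₂ hU₂
  refine ⟨V₁ ∩ V₂, ?_, Set.inter_subset_inter hVU₁ hVU₂,
    (hqc₁.of_le inf_le_left).inter (hqc₂.of_le inf_le_right)⟩
  rw [nhds_inf (t₁ := t₁)]
  exact inter_mem_inf hV₁ hV₂

end QuasiConvexity

section UniformConvergence

open UniformConvergence

variable {G ι : Type*} [AddCommGroup G]

/-- The family of characters `χ`, viewed as a single character with values in the group
`ι →ᵤ Circle` of circle-valued functions with the topology of uniform convergence. -/
def evalAddChar (χ : ι → AddChar G Circle) : AddChar G (ι →ᵤ Circle) where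
  toFun x := UniformFun.ofFun fun i => χ i x
  map_zero_eq_one' := congrArg UniformFun.ofFun (funext fun i => (χ i).map_zero_eq_one)
  map_add_eq_mul' x y := congrArg UniformFun.ofFun (funext fun i => (χ i).map_add_eq_mul x y)

/-- The group topology on `G` of uniform convergence of the characters `χ i`: the coarsest one
for which `x ↦ (χ i x)ᵢ` is continuous into `ι →ᵤ Circle`. -/
def uniformConvergenceTopology (χ : ι → AddChar G Circle) : AddGroupTopology G where
  toTopologicalSpace := .induced (evalAddChar χ) inferInstance
  toIsTopologicalAddGroup := topologicalAddGroup_induced (evalAddChar χ).toAddMonoidHom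

lemma hasBasis_nhds_uniformConvergenceTopology (χ : ι → AddChar G Circle) {κ : Type*}
    {p : κ → Prop} {b : κ → Set Circle} (hb : (𝓝 (1 : Circle)).HasBasis p b) :
    (@nhds G (uniformConvergenceTopology χ).toTopologicalSpace 0).HasBasis p
      fun k => {x | ∀ i, χ i x ∈ b k} := by
  have h := (UniformFun.hasBasis_nhds_one_of_basis (α := ι) hb).comap (evalAddChar χ)
  rwa [← (evalAddChar χ).map_zero_eq_one, ← nhds_induced] at h

lemma continuous_uniformConvergenceTopology (χ : ι → AddChar G Circle) (i : ι) :
    Continuous[(uniformConvergenceTopology χ).toTopologicalSpace, _] (χ i) :=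
  continuous_iff_le_induced.2 <|
    (induced_mono (UniformFun.uniformContinuous_eval Circle i).continuous.le_induced).trans_eq
      induced_compose

lemma locallyQuasiConvex_uniformConvergenceTopology (χ : ι → AddChar G Circle) :
    LocallyQuasiConvex (uniformConvergenceTopology χ).toTopologicalSpace := by
  intro U hU
  obtain ⟨i, -, hi⟩ :=
    (hasBasis_nhds_uniformConvergenceTopology χ hasBasis_nhds_one_circle).mem_iff.1 hU
  refine ⟨_, (hasBasis_nhds_uniformConvergenceTopology χ hasBasis_nhds_one_circle).mem_of_mem
    (i := i) trivial, hi, ?_⟩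
  convert isQuasiConvex_setOf_forall_mem_SPlus (ι := ι × Set.Iic i)
    (χ := fun k => χ k.1 ^ (k.2 : ℕ)) ?_ using 1
  · ext x
    simp
  · intro k
    let _ := (uniformConvergenceTopology χ).toTopologicalSpace
    exact (continuous_uniformConvergenceTopology χ k.1).pow k.2

end UniformConvergence

section Kraft

variable {ι : Type*}

-- The weights `2⁻¹ ^ l i` behave as in Kraft's inequality: take `T ⊂ s` maximal of weight less than
-- `2⁻¹ ^ (n + 1)` and `i ∈ s \ T`; then `s \ (T ∪ {i})` also has weight less than `2⁻¹ ^ (n + 1)`.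
lemma sum_mem_of_sum_two_inv_pow_lt {M : Type*} [AddCommMonoid M] {V : ℕ → Set M}
    (hzero : ∀ n, 0 ∈ V n)
    (hadd : ∀ n, ∀ x ∈ V (n + 1), ∀ y ∈ V (n + 1), ∀ z ∈ V (n + 1), x + y + z ∈ V n)
    {l : ι → ℕ} {x : ι → M} (hx : ∀ i, x i ∈ V (l i)) (s : Finset ι) (n : ℕ)
    (hs : ∑ i ∈ s, (2⁻¹ : ℝ) ^ l i < 2⁻¹ ^ n) : ∑ i ∈ s, x i ∈ V n := by
  classical
  induction s using Finset.strongInduction generalizing n with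
  | H s ih =>
  obtain rfl | hne := s.eq_empty_or_nonempty
  · simpa using hzero n
  let light (T : Finset ι) : Prop := ∑ i ∈ T, (2⁻¹ : ℝ) ^ l i < 2⁻¹ ^ (n + 1)
  obtain ⟨T, hT, hmax⟩ := (s.ssubsets.filter light).exists_maximal
    ⟨∅, by simp [light, Finset.empty_ssubset.2 hne]⟩
  obtain ⟨hTs, hTlight⟩ : T ⊂ s ∧ light T := by simpa using hT
  obtain ⟨i, his, hiT⟩ := Finset.exists_of_ssubset hTs
  have hsub : insert i T ⊆ s := Finset.insert_subset his hTs.subset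
  have hrest_light : light (s \ insert i T) := by
    by_contra hheavy
    have hrest : (s \ insert i T).Nonempty := Finset.nonempty_iff_ne_empty.2 fun h => by
      simp [light, h] at hheavy
    have hlight : light (insert i T) := by
      have hsum := Finset.sum_sdiff hsub (f := fun i => (2⁻¹ : ℝ) ^ l i)
      have htwo : (2⁻¹ : ℝ) ^ n = 2 * 2⁻¹ ^ (n + 1) := by ring
      simp only [light, not_lt] at hheavy ⊢
      linarith
    have hss : insert i T ⊂ s := hsub.ssubset_of_ne fun h => by simp [h] at hrest
    exact hiT (hmax (by simpa using ⟨hss, hlight⟩) (Finset.subset_insert i T)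
      (Finset.mem_insert_self i T))
  have hli : n < l i := by
    have := (Finset.single_le_sum (f := fun i => (2⁻¹ : ℝ) ^ l i) (fun _ _ => by positivity)
      his).trans_lt hs
    exact (pow_lt_pow_iff_right_of_lt_one₀ (by norm_num) (by norm_num)).1 this
  have hanti : Antitone V := antitone_nat_of_succ_le fun n y hy => by
    simpa using hadd n y hy 0 (hzero _) 0 (hzero _)
  have hss : s \ insert i T ⊂ s := Finset.sdiff_ssubset hsub (Finset.insert_nonempty i T)
  rw [← Finset.sum_sdiff hsub, Finset.sum_insert hiT, ← add_assoc]
  exact hadd n _ (ih _ hss _ hrest_light) _ (hanti hli (hx i)) _ (ih T hTs _ hTlight)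

lemma sum_zsmul_mem_of_sum_two_inv_pow_lt {G : Type*} [AddCommGroup G] {V : ℕ → Set G}
    (hzero : ∀ n, 0 ∈ V n) (hneg : ∀ n, -V n = V n)
    (hadd : ∀ n, ∀ x ∈ V (n + 1), ∀ y ∈ V (n + 1), ∀ z ∈ V (n + 1), x + y + z ∈ V n)
    {l : ι → ℕ} {v : ι → G} (hv : ∀ i, v i ∈ V (l i)) (s : Finset ι) (c : ι → ℤ) (n : ℕ)
    (hs : ∑ i ∈ s, (2⁻¹ : ℝ) ^ l i * |(c i : ℝ)| < 2⁻¹ ^ n) : ∑ i ∈ s, c i • v i ∈ V n := by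
  have hsign (i : ι) : (c i).sign • v i ∈ V (l i) := by
    obtain h | h | h := (c i).sign_trichotomy
    · simpa [h] using hv i
    · simpa [h] using hzero (l i)
    · rw [h, neg_one_smul, ← Set.mem_neg, hneg]
      exact hv i
  have hsum (i : ι) : c i • v i = ∑ _j ∈ Finset.range (c i).natAbs, (c i).sign • v i := by
    rw [Finset.sum_const, Finset.card_range, ← natCast_zsmul, ← mul_smul, mul_comm,
      Int.sign_mul_natAbs]
  simp only [hsum, Finset.sum_sigma']
  refine sum_mem_of_sum_two_inv_pow_lt hzero hadd (l := fun p => l p.1) (fun p => hsign p.1) _ n ?_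
  rw [Finset.sum_sigma]
  simpa [mul_comm] using hs

lemma exists_seq_nhds_zero {G : Type*} [AddCommGroup G] [TopologicalSpace G]
    [IsTopologicalAddGroup G] {U : Set G} (hU : U ∈ 𝓝 0) :
    ∃ V : ℕ → Set G, V 0 = Set.univ ∧ V 1 ⊆ U ∧ (∀ n, V n ∈ 𝓝 0) ∧ (∀ n, -V n = V n) ∧
      ∀ n, ∀ x ∈ V (n + 1), ∀ y ∈ V (n + 1), ∀ z ∈ V (n + 1), x + y + z ∈ V n := by
  have hstep : ∀ W ∈ 𝓝 (0 : G), ∃ W' ∈ 𝓝 (0 : G), W' ⊆ U ∧ -W' = W' ∧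
      ∀ x ∈ W', ∀ y ∈ W', ∀ z ∈ W', x + y + z ∈ W := fun W hW => by
    obtain ⟨W₁, hW₁, hadd⟩ := exists_nhds_zero_quarter hW
    have hW₁U := inter_mem hW₁ hU
    refine ⟨(W₁ ∩ U) ∩ -(W₁ ∩ U), inter_mem hW₁U (neg_mem_nhds_zero G hW₁U),
      fun x hx => hx.1.2, by rw [Set.inter_neg, neg_neg, Set.inter_comm], fun x hx y hy z hz => ?_⟩
    simpa using hadd hx.1.1 hy.1.1 hz.1.1 (mem_of_mem_nhds hW₁)
  choose! F hF hFU hFneg hFadd using hstep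
  have hV (n : ℕ) : F^[n] Set.univ ∈ 𝓝 (0 : G) := by
    induction n with
    | zero => exact univ_mem
    | succ n ih => rw [Function.iterate_succ_apply']; exact hF _ ih
  refine ⟨fun n => F^[n] Set.univ, rfl, hFU _ univ_mem, hV, fun n => ?_, fun n => ?_⟩
  · cases n with
    | zero => simp
    | succ n => simp only [Function.iterate_succ_apply', hFneg _ (hV n)]
  · simp only [Function.iterate_succ_apply']
    exact hFadd _ (hV n)

lemma exists_tendsto_atTop_and_forall {P : ℕ → ℕ → Prop} (hzero : ∀ k, P 0 k)
    (hP : ∀ n, ∀ᶠ k in atTop, P n k) :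
    ∃ l : ℕ → ℕ, Tendsto l atTop atTop ∧ ∀ k, P (l k) k := by
  classical
  refine ⟨fun k => Nat.findGreatest (P · k) k, tendsto_atTop.2 fun n => ?_,
    fun k => Nat.findGreatest_spec (P := (P · k)) (Nat.zero_le k) (hzero k)⟩
  filter_upwards [hP n, eventually_ge_atTop n] with k hk hnk
  exact Nat.le_findGreatest hnk hk

end Kraft

section WeightedNorm

variable {ι : Type*}

/-- The weighted `ℓ¹`-norm `∑ n, g n * |x n|` on the free abelian group `ℤ^(ι)`. -/
def weightedNorm (g : ι → ℝ) (x : ι →₀ ℤ) : ℝ := x.sum fun n a => g n * |(a : ℝ)|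

lemma exists_weight_of_tendsto_zero {G : Type*} [AddCommGroup G] [TopologicalSpace G]
    [IsTopologicalAddGroup G] {v : ℕ → G} (hv : Tendsto v atTop (𝓝 0)) {U : Set G} (hU : U ∈ 𝓝 0) :
    ∃ g : ℕ → ℝ, 0 ≤ g ∧ Tendsto g atTop (𝓝 0) ∧
      ∀ x, weightedNorm g x ≤ 1 → (x.sum fun n a => a • v n) ∈ U := by
  obtain ⟨V, hV0, hV1, hV, hneg, hadd⟩ := exists_seq_nhds_zero hU
  obtain ⟨l, hl, hvl⟩ := exists_tendsto_atTop_and_forall (P := fun n k => v k ∈ V n)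
    (fun k => by simp [hV0]) fun n => hv (hV n)
  refine ⟨fun k => 4 * 2⁻¹ ^ l k, fun k => by positivity, ?_, fun x hx => ?_⟩
  · simpa using ((tendsto_pow_atTop_nhds_zero_of_lt_one (r := (2⁻¹ : ℝ)) (by norm_num)
      (by norm_num)).comp hl).const_mul 4
  · refine hV1 (sum_zsmul_mem_of_sum_two_inv_pow_lt (fun n => mem_of_mem_nhds (hV n)) hneg hadd hvl
      x.support x 1 ?_)
    simp only [weightedNorm, Finsupp.sum, mul_assoc, ← Finset.mul_sum] at hx
    linarith

/-- The character `x ↦ exp (i ∑ n, t n * x n)` of `ℤ^(ι)`. -/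
def expChar (t : ι → ℝ) : AddChar (ι →₀ ℤ) Circle where
  toFun x := Circle.exp (x.sum fun n a => t n * a)
  map_zero_eq_one' := by simp
  map_add_eq_mul' x y := by
    rw [← Circle.exp_add, Finsupp.sum_add_index' (by simp) fun n a b => by push_cast; ring]

lemma expChar_apply (t : ι → ℝ) (x : ι →₀ ℤ) :
    expChar t x = Circle.exp (x.sum fun n a => t n * a) := rfl

lemma exists_sum_mul_eq_weightedNorm {g : ι → ℝ} (hg : 0 ≤ g) (x : ι →₀ ℤ) :
    ∃ t : ι → ℝ, (∀ n, |t n| ≤ g n) ∧ (x.sum fun n a => t n * a) = weightedNorm g x := by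
  refine ⟨fun n => (x n).sign * g n, fun n => ?_, Finset.sum_congr rfl fun n _ => ?_⟩
  · have hgn : 0 ≤ g n := hg n
    obtain h | h | h := (x n).sign_trichotomy <;> simp [h, hgn, abs_of_nonneg]
  · have hsign : |(x n : ℝ)| = (x n).sign * x n := by
      exact_mod_cast (Int.sign_mul_self_eq_abs (x n)).symm
    simp only [hsign]
    ring

/-- The family of all characters `expChar t` of `ℤ^(ι)` with angles `|t n| ≤ (π / 2) * g n`; for
`0 ≤ g`, the common preimage of `𝕊₊` under them is the unit ball of `weightedNorm g`. -/
def boundedExpChar (g : ι → ℝ) (t : {t : ι → ℝ // ∀ n, |t n| ≤ Real.pi / 2 * g n}) :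
    AddChar (ι →₀ ℤ) Circle :=
  expChar t.1

-- If `N = weightedNorm g x > 1`, then rescaling the extremal `t` by `min 1 (2 / N)` puts the angle
-- of `expChar t x` into `(π / 2, π]`.
lemma weightedNorm_le_one_iff {g : ι → ℝ} (hg : 0 ≤ g) {x : ι →₀ ℤ} : weightedNorm g x ≤ 1 ↔
    ∀ t, boundedExpChar g t x ∈ SPlus := by
  have hpi := Real.pi_pos
  refine ⟨fun hx ⟨t, ht⟩ => exp_mem_SPlus ?_, fun hx => by_contra fun hlt => ?_⟩
  · calc |x.sum fun n a => t n * a| ≤ x.sum fun n a => Real.pi / 2 * (g n * |(a : ℝ)|) := by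
          refine (Finset.abs_sum_le_sum_abs _ _).trans (Finset.sum_le_sum fun n _ => ?_)
          simpa only [abs_mul, mul_assoc] using mul_le_mul_of_nonneg_right (ht n) (abs_nonneg _)
      _ = Real.pi / 2 * weightedNorm g x := (Finsupp.mul_sum _ _).symm
      _ ≤ Real.pi / 2 := mul_le_of_le_one_right (by positivity) hx
  · have hN : 1 < weightedNorm g x := not_le.1 hlt
    obtain ⟨t, ht, htx⟩ := exists_sum_mul_eq_weightedNorm hg x
    let r : ℝ := min 1 (2 / weightedNorm g x)
    have hr0 : 0 ≤ r := by positivity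
    have hrN : r * weightedNorm g x = min (weightedNorm g x) 2 := by
      rw [min_mul_of_nonneg _ _ (by positivity), one_mul, div_mul_cancel₀ _ (by positivity)]
    have hmem := hx ⟨fun n => Real.pi / 2 * (r * t n), fun n => by
      rw [abs_mul, abs_mul, abs_of_nonneg hr0, abs_of_pos Real.pi_div_two_pos]
      gcongr
      exact (mul_le_of_le_one_left (abs_nonneg _) (min_le_left _ _)).trans (ht n)⟩
    simp only [boundedExpChar, expChar_apply, mul_assoc, ← Finsupp.mul_sum, htx, hrN] at hmem
    have hmin : 1 < min (weightedNorm g x) 2 := lt_min hN one_lt_two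
    have hmin_le : min (weightedNorm g x) 2 ≤ 2 := min_le_right _ _
    exact exp_notMem_SPlus (by nlinarith) (by nlinarith) hmem

end WeightedNorm

section GraevTopology

lemma continuous_sMap_iff {t : TopologicalSpace (ℕ →₀ ℤ)} :
    Continuous[_, t] sMap ↔ Tendsto (fun n => Finsupp.single n 1) atTop (@nhds _ t 0) := by
  have hmem : ∀ p, LightProfinite.natUnionInftyEmbedding p ∈ sSet
    | none => .inl rfl
    | some n => .inr ⟨n + 1, n.succ_pos, by push_cast; rfl⟩
  let q : OnePoint ℕ → sSet := Set.codRestrict LightProfinite.natUnionInftyEmbedding sSet hmem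
  have hq : IsQuotientMap q := by
    refine .of_surjective_continuous ?_
      (LightProfinite.natUnionInftyEmbedding.continuous.codRestrict hmem)
    rintro ⟨_, rfl | ⟨n, hn, rfl⟩⟩
    · exact ⟨OnePoint.infty, rfl⟩
    · obtain ⟨n, rfl⟩ := Nat.exists_eq_succ_of_ne_zero hn.ne'
      exact ⟨(n : OnePoint ℕ), Subtype.ext (by push_cast; rfl)⟩
  have hinfty : sMap (q OnePoint.infty) = 0 := if_pos rfl
  have hnat (n : ℕ) : sMap (q n) = Finsupp.single (n + 1) 1 := by
    have hqn : ((q n : sSet) : ℝ) = ((n + 1 : ℕ) : ℝ)⁻¹ := by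
      rw [← one_div]
      push_cast
      rfl
    rw [sMap, hqn, if_neg (by positivity), one_div, inv_inv, Nat.ceil_natCast]
  rw [hq.continuous_iff, OnePoint.continuous_iff_from_nat,
    ← tendsto_add_atTop_iff_nat (f := fun n => Finsupp.single n (1 : ℤ)) 1]
  simp only [Function.comp_apply, hinfty, hnat]

lemma tau_le_iff {t : AddGroupTopology (ℕ →₀ ℤ)} : tau ≤ t.toTopologicalSpace ↔
    Tendsto (fun n => Finsupp.single n 1) atTop (@nhds _ t.toTopologicalSpace 0) := by
  rw [← continuous_sMap_iff]
  refine ⟨fun h => ?_, fun h => ?_⟩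
  · refine continuous_le_rng h ?_
    rw [tau, tauGT, AddGroupTopology.toTopologicalSpace_sInf, continuous_sInf_rng]
    rintro _ ⟨t, ht, rfl⟩
    exact ht
  · have : tauGT ≤ t := sInf_le h
    exact this

lemma tendsto_single_nhds_tau :
    Tendsto (fun n => Finsupp.single n 1) atTop (@nhds _ tau 0) :=
  tau_le_iff (t := tauGT).1 le_rfl

lemma tau_le_uniformConvergenceTopology_iff {ι : Type*} {χ : ι → AddChar (ℕ →₀ ℤ) Circle} :
    tau ≤ (uniformConvergenceTopology χ).toTopologicalSpace ↔
      ∀ U ∈ 𝓝 (1 : Circle), ∀ᶠ n in atTop, ∀ i, χ i (Finsupp.single n 1) ∈ U := by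
  rw [tau_le_iff, (hasBasis_nhds_uniformConvergenceTopology χ (basis_sets _)).tendsto_right_iff]
  rfl

lemma continuous_tau_iff {χ : AddChar (ℕ →₀ ℤ) Circle} : Continuous[tau, _] χ ↔
    Tendsto (fun n => χ (Finsupp.single n 1)) atTop (𝓝 1) := by
  refine ⟨fun h => ?_, fun h => ?_⟩
  · let _ : TopologicalSpace (ℕ →₀ ℤ) := tau
    have := (h.tendsto 0).comp tendsto_single_nhds_tau
    rwa [χ.map_zero_eq_one] at this
  · refine continuous_le_dom (tau_le_uniformConvergenceTopology_iff (χ := fun _ : Unit => χ).2 ?_)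
      (continuous_uniformConvergenceTopology (fun _ : Unit => χ) ())
    simpa using fun U hU => h.eventually_mem hU

lemma tau_le_uniformConvergenceTopology_boundedExpChar {g : ℕ → ℝ} (hlim : Tendsto g atTop (𝓝 0)) :
    tau ≤ (uniformConvergenceTopology (boundedExpChar g)).toTopologicalSpace := by
  refine tau_le_uniformConvergenceTopology_iff.2 fun U hU => ?_
  obtain ⟨r, hr, hrU⟩ := Metric.mem_nhds_iff.1
    (Circle.exp.continuous.continuousAt.preimage_mem_nhds (x := 0) (by simpa using hU))
  have hsmall : ∀ᶠ n in atTop, Real.pi / 2 * g n < r :=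
    (hlim.const_mul (Real.pi / 2)).eventually (gt_mem_nhds (by simpa using hr))
  filter_upwards [hsmall] with n hn t
  have hball : t.1 n ∈ Metric.ball 0 r := by simpa using (t.2 n).trans_lt hn
  simpa [boundedExpChar, expChar_apply] using hrU hball

lemma isQuasiConvex_weightedNorm_le_one {g : ℕ → ℝ} (hg : 0 ≤ g) (hlim : Tendsto g atTop (𝓝 0)) :
    IsQuasiConvex tau {x | weightedNorm g x ≤ 1} := by
  simp only [weightedNorm_le_one_iff hg]
  exact isQuasiConvex_setOf_forall_mem_SPlus fun t =>
    continuous_le_dom (tau_le_uniformConvergenceTopology_boundedExpChar hlim)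
      (continuous_uniformConvergenceTopology _ t)

lemma weightedNorm_le_one_mem_nhds_tau {g : ℕ → ℝ} (hg : 0 ≤ g) (hlim : Tendsto g atTop (𝓝 0)) :
    {x | weightedNorm g x ≤ 1} ∈ @nhds _ tau 0 := by
  simp only [weightedNorm_le_one_iff hg]
  exact nhds_mono (tau_le_uniformConvergenceTopology_boundedExpChar hlim)
    ((hasBasis_nhds_uniformConvergenceTopology _ (basis_sets _)).mem_of_mem SPlus_mem_nhds_one)

lemma hasBasis_nhds_tau : (@nhds _ tau 0).HasBasis
    (fun g : ℕ → ℝ => 0 ≤ g ∧ Tendsto g atTop (𝓝 0)) fun g => {x | weightedNorm g x ≤ 1} := by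
  let _ : TopologicalSpace (ℕ →₀ ℤ) := tau
  have : IsTopologicalAddGroup (ℕ →₀ ℤ) := tauGT.toIsTopologicalAddGroup
  refine ⟨fun U => ⟨fun hU => ?_, ?_⟩⟩
  · obtain ⟨g, hg, hlim, hgU⟩ := exists_weight_of_tendsto_zero tendsto_single_nhds_tau hU
    exact ⟨g, ⟨hg, hlim⟩, fun x hx => by simpa using hgU x hx⟩
  · rintro ⟨g, ⟨hg, hlim⟩, hgU⟩
    exact mem_of_superset (weightedNorm_le_one_mem_nhds_tau hg hlim) hgU

lemma locallyQuasiConvex_tau : LocallyQuasiConvex tau := by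
  intro U hU
  obtain ⟨g, ⟨hg, hlim⟩, hgU⟩ := hasBasis_nhds_tau.mem_iff.1 hU
  exact ⟨_, hasBasis_nhds_tau.mem_of_mem ⟨hg, hlim⟩, hgU, isQuasiConvex_weightedNorm_le_one hg hlim⟩

end GraevTopology

section FinerTopology

/-- The character `x ↦ z ^ x n` of `ℤ^(ι)`. -/
def coordChar {ι : Type*} (z : Circle) (n : ι) : AddChar (ι →₀ ℤ) Circle where
  toFun x := z ^ x n
  map_zero_eq_one' := by simp
  map_add_eq_mul' x y := by rw [Finsupp.add_apply, zpow_add]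

lemma coordChar_apply {ι : Type*} (z : Circle) (n : ι) (x : ι →₀ ℤ) :
    coordChar z n x = z ^ x n := rfl

/-- The topology `ν`: the join of `τ` with the topology of uniform convergence of the characters
`x ↦ z ^ x n`; in the order of group topologies, where smaller means finer, it is an infimum. -/
def nuGT (z : Circle) : AddGroupTopology (ℕ →₀ ℤ) :=
  tauGT ⊓ uniformConvergenceTopology (coordChar z)

variable {z : Circle}

lemma toTopologicalSpace_nuGT : (nuGT z).toTopologicalSpace =
    tau ⊓ (uniformConvergenceTopology (coordChar z)).toTopologicalSpace := rfl

lemma nuGT_le_tau : (nuGT z).toTopologicalSpace ≤ tau := inf_le_left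

lemma locallyQuasiConvex_nuGT : LocallyQuasiConvex (nuGT z).toTopologicalSpace :=
  locallyQuasiConvex_tau.inf (locallyQuasiConvex_uniformConvergenceTopology _)

lemma tau_ne_nuGT (hz : z ≠ 1) : tau ≠ (nuGT z).toTopologicalSpace := by
  intro h
  have hle : tau ≤ (uniformConvergenceTopology (coordChar z)).toTopologicalSpace :=
    h.trans_le inf_le_right
  obtain ⟨n, hn⟩ := (tau_le_uniformConvergenceTopology_iff.1 hle _
    (isOpen_ne.mem_nhds hz.symm)).exists
  exact hn n (by simp [coordChar_apply])

lemma eventually_weightedNorm_indicator_le_one {g : ℕ → ℝ} (hlim : Tendsto g atTop (𝓝 0))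
    (a : ℤ) (m : ℕ) : ∀ᶠ n in atTop, ∀ F : Finset ℕ, F.card = m → (∀ k ∈ F, n ≤ k) →
      weightedNorm g (Finsupp.indicator F fun _ _ => a) ≤ 1 := by
  have hsmall : ∀ᶠ k in atTop, g k * |(a : ℝ)| < (m + 1 : ℝ)⁻¹ :=
    (hlim.mul_const |(a : ℝ)|).eventually (gt_mem_nhds (by rw [zero_mul]; positivity))
  filter_upwards [eventually_forall_ge_atTop.2 hsmall] with n hn F hF hnF
  calc weightedNorm g (Finsupp.indicator F fun _ _ => a) = ∑ k ∈ F, g k * |(a : ℝ)| :=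
        Finsupp.sum_indicator_index _ (by simp)
    _ ≤ m * (m + 1 : ℝ)⁻¹ := by
        simpa [hF] using Finset.sum_le_card_nsmul F _ _ fun k hk => (hn k (hnF k hk)).le
    _ ≤ 1 := by
        rw [← div_eq_mul_inv]
        exact div_le_one_of_le₀ (by linarith) (by positivity)

lemma tendsto_zpow_of_forall_mem_SPlus {χ : AddChar (ℕ →₀ ℤ) Circle} {g : ℕ → ℝ}
    (hlim : Tendsto g atTop (𝓝 0)) {U : Set Circle} (hU : 1 ∈ U)
    (hχ : ∀ x, weightedNorm g x ≤ 1 → (∀ n, z ^ x n ∈ U) → χ x ∈ SPlus) {a : ℤ} (ha : z ^ a ∈ U) :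
    Tendsto (fun n => χ (Finsupp.single n 1) ^ a) atTop (𝓝 1) := by
  refine tendsto_one_of_prod_mem_SPlus fun m => ?_
  filter_upwards [eventually_weightedNorm_indicator_le_one hlim a m] with n hn F hF hnF
  have hmem := hχ _ (hn F hF hnF) fun k => by
    rw [Finsupp.indicator_apply]
    split_ifs
    · exact ha
    · rwa [zpow_zero]
  have hprod : χ (∑ k ∈ F, Finsupp.single k a) = ∏ k ∈ F, χ (Finsupp.single k a) :=
    map_sum χ.toAddMonoidHom _ F
  rw [Finsupp.indicator_eq_sum_single, hprod] at hmem
  simpa only [← AddChar.map_zsmul_eq_zpow, Finsupp.smul_single_one] using hmem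

lemma compatible_nuGT_tau (hz : ¬ IsOfFinOrder z) :
    Compatible (nuGT z).toTopologicalSpace tau := by
  refine compatible_iff_forall_addChar.2 fun χ => ⟨fun hχ => ?_, continuous_le_dom nuGT_le_tau⟩
  have hnhds : χ ⁻¹' SPlus ∈ @nhds _ (nuGT z).toTopologicalSpace 0 :=
    let _ : TopologicalSpace (ℕ →₀ ℤ) := (nuGT z).toTopologicalSpace
    hχ.continuousAt.preimage_mem_nhds (by simpa using SPlus_mem_nhds_one)
  rw [toTopologicalSpace_nuGT, nhds_inf (t₁ := tau), (hasBasis_nhds_tau.inf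
    (hasBasis_nhds_uniformConvergenceTopology _ (basis_sets _))).mem_iff] at hnhds
  obtain ⟨⟨g, U⟩, ⟨⟨-, hlim⟩, hU⟩, hgU⟩ := hnhds
  let H : AddSubgroup ℤ :=
    { carrier := {a | Tendsto (fun n => χ (Finsupp.single n 1) ^ a) atTop (𝓝 1)}
      zero_mem' := by simp
      add_mem' := fun ha hb => by simpa [zpow_add] using ha.mul hb
      neg_mem' := fun ha => by simpa using ha.inv }
  have hH : 1 ∈ H := one_mem_of_forall_zpow_mem hz hU fun a ha =>
    tendsto_zpow_of_forall_mem_SPlus hlim (mem_of_mem_nhds hU)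
      (fun x hx hxU => hgU ⟨hx, hxU⟩) ha
  exact continuous_tau_iff.2 (by simpa [H] using hH)

end FinerTopology

/-- The group `A_G(s)` is not a quasi-Mackey group: there is a locally quasi-convex group
topology `ν` on `ℤ^(ℕ)` compatible with `τ` which is strictly finer than `τ`
(every `τ`-open set is `ν`-open, and `ν ≠ τ`). -/
theorem A_G_s_not_quasiMackey :
    ∃ ν : AddGroupTopology (ℕ →₀ ℤ),
      LocallyQuasiConvex ν.toTopologicalSpace ∧
      Compatible ν.toTopologicalSpace tau ∧
      (∀ U : Set (ℕ →₀ ℤ), IsOpen[tau] U → IsOpen[ν.toTopologicalSpace] U) ∧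
      tau ≠ ν.toTopologicalSpace := by
  obtain ⟨z, hz⟩ := exists_circle_not_isOfFinOrder
  have hz1 : z ≠ 1 := fun h => hz (h ▸ IsOfFinOrder.one)
  exact ⟨nuGT z, locallyQuasiConvex_nuGT, compatible_nuGT_tau hz, nuGT_le_tau, tau_ne_nuGT hz1⟩

end
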